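/- arXiv:quant-ph/0006114 — 3 statements merged into one kernel-verified Lean document; each statement's English description precedes it below -/
import Mathlib

section
/- (Kostant convexity for the pair (su(4), su(2)⊕su(2)).) Let Γ denote the orthogonal projection of su(4) onto 𝔥 = span_ℝ{iI_xS_x, iI_yS_y, iI_zS_z} with respect to the inner product ⟨A,B⟩ = tr(A†B). Then the image under Γ of the adjoint orbit {(k₁⊗k₂)⁻¹ (i I_zS_z) (k₁⊗k₂) : k₁, k₂ ∈ SU(2)} equals the convex hull of the six points {±iI_xS_x, ±iI_yS_y, ±iI_zS_z}. -/
open Kronecker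
open scoped Matrix

/-- One half times the Pauli matrix `σ_x`. -/
noncomputable def pax : Matrix (Fin 2) (Fin 2) ℂ := (1 / 2 : ℂ) • !![0, 1; 1, 0]

/-- One half times the Pauli matrix `σ_y`. -/
noncomputable def pay : Matrix (Fin 2) (Fin 2) ℂ :=
  (1 / 2 : ℂ) • !![0, -Complex.I; Complex.I, 0]

/-- One half times the Pauli matrix `σ_z`. -/
noncomputable def paz : Matrix (Fin 2) (Fin 2) ℂ := (1 / 2 : ℂ) • !![1, 0; 0, -1]

/-- The three spin-1/2 operators, indexed by `Fin 3` (`0 ↦ x`, `1 ↦ y`, `2 ↦ z`). -/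
noncomputable def pauli : Fin 3 → Matrix (Fin 2) (Fin 2) ℂ := ![pax, pay, paz]

/-- The first-spin operators `I_α = σ_α ⊗ 1`. -/
noncomputable def Iop (a : Fin 3) : Matrix (Fin 2 × Fin 2) (Fin 2 × Fin 2) ℂ :=
  pauli a ⊗ₖ (1 : Matrix (Fin 2) (Fin 2) ℂ)

/-- The second-spin operators `S_α = 1 ⊗ σ_α`. -/
noncomputable def Sop (a : Fin 3) : Matrix (Fin 2 × Fin 2) (Fin 2 × Fin 2) ℂ :=
  (1 : Matrix (Fin 2) (Fin 2) ℂ) ⊗ₖ pauli a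

noncomputable abbrev Ix' := Iop 0
noncomputable abbrev Iy' := Iop 1
noncomputable abbrev Iz' := Iop 2
noncomputable abbrev Sx' := Sop 0
noncomputable abbrev Sy' := Sop 1
noncomputable abbrev Sz' := Sop 2

/-- The subgroup `K = {k₁ ⊗ k₂ : k₁, k₂ ∈ SU(2)}` of `SU(4)`. -/
def K2 : Set (Matrix (Fin 2 × Fin 2) (Fin 2 × Fin 2) ℂ) :=
  {g | ∃ k₁ ∈ Matrix.specialUnitaryGroup (Fin 2) ℂ,
       ∃ k₂ ∈ Matrix.specialUnitaryGroup (Fin 2) ℂ, g = k₁ ⊗ₖ k₂}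

/-- The orthonormal direction `i I_αS_α` (for `α = x,y,z`) spanning the Cartan subalgebra
`𝔥 = span_ℝ{iI_xS_x, iI_yS_y, iI_zS_z}`. -/
noncomputable def hbasis (a : Fin 3) : Matrix (Fin 2 × Fin 2) (Fin 2 × Fin 2) ℂ :=
  Complex.I • (Iop a * Sop a)

/-- The orthogonal projection of `su(4)` onto `𝔥 = span_ℝ{iI_xS_x, iI_yS_y, iI_zS_z}` with
respect to the (real) inner product `⟨A,B⟩ = tr(A†B)`: the elements `i I_αS_α` are pairwise
orthogonal with `⟨iI_αS_α, iI_αS_α⟩ = 1/4`. -/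
noncomputable def Gamma (A : Matrix (Fin 2 × Fin 2) (Fin 2 × Fin 2) ℂ) :
    Matrix (Fin 2 × Fin 2) (Fin 2 × Fin 2) ℂ :=
  ∑ a : Fin 3, (4 * ((hbasis a)ᴴ * A).trace.re) • hbasis a

/-- The adjoint orbit `{(k₁⊗k₂)⁻¹ (i I_zS_z) (k₁⊗k₂) : k₁, k₂ ∈ SU(2)}`. -/
def adOrbitIzSz : Set (Matrix (Fin 2 × Fin 2) (Fin 2 × Fin 2) ℂ) :=
  {A | ∃ k₁ ∈ Matrix.specialUnitaryGroup (Fin 2) ℂ,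
       ∃ k₂ ∈ Matrix.specialUnitaryGroup (Fin 2) ℂ,
       A = (k₁ ⊗ₖ k₂)⁻¹ * (Complex.I • (Iz' * Sz')) * (k₁ ⊗ₖ k₂)}

/-!
Write `u · σ` for the spin operator attached to `u ∈ ℝ³`. Two Hermitian matrices with the same
characteristic polynomial are conjugate under `SU(n)`; for `n = 2` this says that the orbit of `σ_z`
consists of the operators `u · σ` with `u` a unit vector. Hence the orbit of `i I_zS_z` is
`{i (u · σ) ⊗ (v · σ) : ‖u‖ = ‖v‖ = 1}`, and `Γ` sends such an element to `∑ₐ uₐ vₐ · i IₐSₐ`.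
The coordinatewise products of two unit vectors fill out exactly the `ℓ¹` unit ball: they lie in it
since `2 |uₐ vₐ| ≤ uₐ² + vₐ²`, and conversely all but two coordinates are matched by square roots
and the remaining two by a pair of points on a circle. The linear image of the `ℓ¹` ball is the
absolutely convex hull of the images of the coordinate vectors.
-/

section LOneBall

variable {ι : Type*} [Fintype ι] {E : Type*} [AddCommGroup E] [Module ℝ E]

lemma absConvex_setOf_sum_smul (b : ι → E) :
    AbsConvex ℝ {x | ∃ c : ι → ℝ, ∑ i, |c i| ≤ 1 ∧ ∑ i, c i • b i = x} := by
  constructor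
  · rw [balanced_iff_smul_mem]
    rintro t ht _ ⟨c, hc, rfl⟩
    refine ⟨t • c, ?_, by simp only [Pi.smul_apply, smul_assoc, Finset.smul_sum]⟩
    calc ∑ i, |(t • c) i| = |t| * ∑ i, |c i| := by
          simp only [Pi.smul_apply, smul_eq_mul, abs_mul, Finset.mul_sum]
      _ ≤ 1 := mul_le_one₀ ht (Finset.sum_nonneg fun i _ => abs_nonneg _) hc
  · rintro _ ⟨c, hc, rfl⟩ _ ⟨d, hd, rfl⟩ p q hp hq hpq
    refine ⟨p • c + q • d, ?_, by
      simp only [Pi.add_apply, Pi.smul_apply, add_smul, smul_assoc, Finset.smul_sum,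
        Finset.sum_add_distrib]⟩
    calc ∑ i, |(p • c + q • d) i| ≤ ∑ i, (p * |c i| + q * |d i|) := by
          refine Finset.sum_le_sum fun i _ => (abs_add_le _ _).trans_eq ?_
          simp only [Pi.smul_apply, smul_eq_mul, abs_mul, abs_of_nonneg hp, abs_of_nonneg hq]
      _ = p * ∑ i, |c i| + q * ∑ i, |d i| := by
          rw [Finset.sum_add_distrib, ← Finset.mul_sum, ← Finset.mul_sum]
      _ ≤ p * 1 + q * 1 := by gcongr
      _ = 1 := by rw [mul_one, mul_one, hpq]

lemma sum_smul_mem_of_absConvex {s : Set E} (hs : AbsConvex ℝ s) (hne : s.Nonempty) {b : ι → E}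
    (hb : ∀ i, b i ∈ s) {c : ι → ℝ} (hc : ∑ i, |c i| ≤ 1) : ∑ i, c i • b i ∈ s := by
  set S := ∑ i, |c i|
  have hS : 0 ≤ S := Finset.sum_nonneg fun i _ => abs_nonneg _
  obtain hS0 | hSpos := hS.eq_or_lt
  · have hc0 : ∀ i, c i = 0 := fun i => by
      simpa using (Finset.sum_eq_zero_iff_of_nonneg fun i _ => abs_nonneg (c i)).1 hS0.symm i
    simpa only [hc0, zero_smul, Finset.sum_const_zero] using hs.1.zero_mem hne
  have hmem : ∑ i, (|c i| / S) • ((S * SignType.sign (c i)) • b i) ∈ s := by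
    refine hs.2.sum_mem (fun i _ => by positivity) ?_ fun i _ => hs.1.smul_mem ?_ (hb i)
    · rw [← Finset.sum_div, div_self hSpos.ne']
    · rw [norm_mul, Real.norm_of_nonneg hS]
      refine mul_le_one₀ hc (norm_nonneg _) ?_
      cases SignType.sign (c i) <;> simp
  convert hmem using 2 with i
  rw [smul_smul, ← mul_assoc, div_mul_cancel₀ _ hSpos.ne', abs_mul_sign]

theorem absConvexHull_range_eq [Nonempty ι] (b : ι → E) :
    absConvexHull ℝ (Set.range b) = {x | ∃ c : ι → ℝ, ∑ i, |c i| ≤ 1 ∧ ∑ i, c i • b i = x} := by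
  classical
  apply Set.Subset.antisymm
  · refine absConvexHull_min ?_ (absConvex_setOf_sum_smul b)
    rintro _ ⟨i, rfl⟩
    exact ⟨Pi.single i 1, by simp [Pi.single_apply, apply_ite abs], by simp [Pi.single_apply]⟩
  · rintro _ ⟨c, hc, rfl⟩
    exact sum_smul_mem_of_absConvex absConvex_absConvexHull
      ((Set.range_nonempty b).mono subset_absConvexHull)
      (fun i => subset_absConvexHull ⟨i, rfl⟩) hc

end LOneBall

lemma insert_neg_eq_range_union_neg_range {α : Type*} [InvolutiveNeg α] (b : Fin 3 → α) :
    ({b 0, -b 0, b 1, -b 1, b 2, -b 2} : Set α) = Set.range b ∪ -Set.range b := by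
  have hrange : Set.range b = {b 0, b 1, b 2} := by
    ext x
    simp [Fin.exists_fin_succ, eq_comm]
  ext x
  simp only [hrange, Set.mem_insert_iff, Set.mem_singleton_iff, Set.mem_union, Set.mem_neg,
    neg_eq_iff_eq_neg]
  tauto

section UnitVectorProducts

lemma exists_mul_cos_eq {m t : ℝ} (h : |t| ≤ m) : ∃ θ, m * Real.cos θ = t := by
  obtain rfl | hm := ((abs_nonneg t).trans h).eq_or_lt
  · exact ⟨0, by simp [abs_nonpos_iff.1 h]⟩
  · obtain ⟨hl, hr⟩ := abs_le.1 h
    refine ⟨Real.arccos (t / m), ?_⟩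
    rw [Real.cos_arccos (by rwa [le_div_iff₀ hm, neg_one_mul]) (by rwa [div_le_one hm]),
      mul_div_cancel₀ _ hm.ne']

lemma exists_sq_add_sq_eq_and_mul_eq {m p q : ℝ} (h : |p| + |q| ≤ m) :
    ∃ x y x' y' : ℝ, x ^ 2 + y ^ 2 = m ∧ x' ^ 2 + y' ^ 2 = m ∧ x * x' = p ∧ y * y' = q := by
  -- With `(x, y) = √m (cos α, sin α)` and `(x', y') = √m (cos β, sin β)`, the equations become
  -- `m cos (α - β) = p + q` and `m cos (α + β) = p - q`.
  have hm : √m ^ 2 = m := Real.sq_sqrt (by linarith [abs_nonneg p, abs_nonneg q])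
  obtain ⟨θ, hθ⟩ := exists_mul_cos_eq ((abs_add_le p q).trans h)
  obtain ⟨φ, hφ⟩ := exists_mul_cos_eq ((abs_sub p q).trans h)
  obtain ⟨α, β, rfl, rfl⟩ : ∃ α β, α - β = θ ∧ α + β = φ :=
    ⟨(φ + θ) / 2, (φ - θ) / 2, by ring, by ring⟩
  rw [Real.cos_sub] at hθ
  rw [Real.cos_add] at hφ
  refine ⟨√m * Real.cos α, √m * Real.sin α, √m * Real.cos β, √m * Real.sin β, ?_, ?_, ?_, ?_⟩
  · linear_combination √m ^ 2 * Real.cos_sq_add_sin_sq α + hm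
  · linear_combination √m ^ 2 * Real.cos_sq_add_sin_sq β + hm
  · linear_combination Real.cos α * Real.cos β * hm + hθ / 2 + hφ / 2
  · linear_combination Real.sin α * Real.sin β * hm + hθ / 2 - hφ / 2

lemma exists_sq_eq_abs_and_mul_eq (c : ℝ) :
    ∃ x y : ℝ, x ^ 2 = |c| ∧ y ^ 2 = |c| ∧ x * y = c := by
  have hs := Real.sq_sqrt (abs_nonneg c)
  obtain hc | hc := abs_choice c
  · exact ⟨√|c|, √|c|, hs, hs, by linear_combination hs + hc⟩
  · exact ⟨√|c|, -√|c|, hs, by rw [neg_sq, hs], by linear_combination -hs - hc⟩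

variable {ι : Type*} [Fintype ι]

lemma sum_abs_mul_le {u v : ι → ℝ} {r : ℝ} (hu : ∑ i, u i ^ 2 = r) (hv : ∑ i, v i ^ 2 = r) :
    ∑ i, |u i * v i| ≤ r := by
  have h : ∀ i, |u i * v i| ≤ (u i ^ 2 + v i ^ 2) / 2 := fun i => by
    rw [abs_mul, ← sq_abs (u i), ← sq_abs (v i)]
    linarith [two_mul_le_add_sq |u i| |v i|]
  calc ∑ i, |u i * v i| ≤ ∑ i, (u i ^ 2 + v i ^ 2) / 2 := Finset.sum_le_sum fun i _ => h i
    _ = r := by rw [← Finset.sum_div, Finset.sum_add_distrib, hu, hv, add_self_div_two]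

theorem exists_sum_sq_eq_and_mul_eq_iff [Nontrivial ι] {c : ι → ℝ} {r : ℝ} :
    (∃ u v : ι → ℝ, ∑ i, u i ^ 2 = r ∧ ∑ i, v i ^ 2 = r ∧ u * v = c) ↔ ∑ i, |c i| ≤ r := by
  classical
  constructor
  · rintro ⟨u, v, hu, hv, rfl⟩
    exact sum_abs_mul_le hu hv
  intro hc
  obtain ⟨i, j, hij⟩ := exists_pair_ne ι
  have hsum : ∀ f : ι → ℝ, ∑ k, f k = f i + f j + ∑ k ∈ {i, j}ᶜ, f k := fun f => by
    rw [← Finset.sum_pair hij, Finset.sum_add_sum_compl]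
  obtain ⟨x, y, x', y', hxy, hxy', hx, hy⟩ :=
    exists_sq_add_sq_eq_and_mul_eq (le_sub_right_of_add_le ((hsum _).symm.trans_le hc))
  choose s t hs ht hst using fun k => exists_sq_eq_abs_and_mul_eq (c k)
  have hsq : ∀ (w : ι → ℝ) (a b : ℝ), (∀ k, w k ^ 2 = |c k|) →
      a ^ 2 + b ^ 2 = r - ∑ k ∈ {i, j}ᶜ, |c k| →
      ∑ k, Function.update (Function.update w i a) j b k ^ 2 = r := fun w a b hw hab => by
    have hcompl : ∑ k ∈ {i, j}ᶜ, Function.update (Function.update w i a) j b k ^ 2 =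
        ∑ k ∈ {i, j}ᶜ, |c k| := Finset.sum_congr rfl fun k hk => by
      simp_all
    simp only [hsum, hcompl, Function.update_self, Function.update_of_ne hij]
    rw [hab, sub_add_cancel]
  refine ⟨_, _, hsq s x y hs hxy, hsq t x' y' ht hxy', funext fun k => ?_⟩
  by_cases hkj : k = j
  · simp [hkj, hy]
  by_cases hki : k = i
  · simp [hki, hij, hx]
  simp [hkj, hki, hst]

end UnitVectorProducts

section UnitaryConjugation

variable {n : Type*} [Fintype n] [DecidableEq n]

lemma exists_unitary_conj_eq_of_charpoly_eq {𝕜 : Type*} [RCLike 𝕜] {A B : Matrix n n 𝕜}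
    (hA : A.IsHermitian) (hB : B.IsHermitian) (h : B.charpoly = A.charpoly) :
    ∃ U ∈ Matrix.unitaryGroup n 𝕜, star U * A * U = B := by
  let W := hA.eigenvectorUnitary * star hB.eigenvectorUnitary
  refine ⟨W, W.2, ?_⟩
  have heig := (hB.eigenvalues_eq_eigenvalues_iff hA).2 h
  rw [← Unitary.conjStarAlgAut_star_apply (S := 𝕜), star_mul, star_star,
    Unitary.conjStarAlgAut_mul_apply, hA.conjStarAlgAut_star_eigenvectorUnitary, ← heig,
    ← hB.spectral_theorem]

lemma exists_smul_mem_specialUnitaryGroup {U : Matrix n n ℂ}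
    (hU : U ∈ Matrix.unitaryGroup n ℂ) :
    ∃ z ∈ unitary ℂ, z • U ∈ Matrix.specialUnitaryGroup n ℂ := by
  obtain _ | _ := isEmpty_or_nonempty n
  · exact ⟨1, one_mem _, by rw [Subsingleton.elim ((1 : ℂ) • U) 1]; exact one_mem _⟩
  have hdet := Matrix.det_of_mem_unitary hU
  obtain ⟨z, hz⟩ := IsAlgClosed.exists_pow_nat_eq (star U.det) (Fintype.card_pos (α := n))
  have hnorm : ‖z‖ = 1 := by
    rw [← pow_eq_one_iff_of_nonneg (norm_nonneg z) (Fintype.card_ne_zero (α := n)),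
      ← norm_pow, hz, norm_star, CStarRing.norm_of_mem_unitary hdet]
  have hzu : z ∈ unitary ℂ := by
    rw [Unitary.mem_iff_star_mul_self, RCLike.star_def, RCLike.conj_mul, hnorm]; simp
  refine ⟨z, hzu, Matrix.mem_specialUnitaryGroup_iff.2 ⟨?_, ?_⟩⟩
  · exact Unitary.smul_mem_of_mem hzu hU
  · rw [Matrix.det_smul, hz, Unitary.star_mul_self_of_mem hdet]

lemma inv_eq_star_of_mem_unitaryGroup {R : Type*} [CommRing R] [StarRing R] {U : Matrix n n R}
    (hU : U ∈ Matrix.unitaryGroup n R) : U⁻¹ = star U :=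
  Matrix.inv_eq_left_inv (Matrix.mem_unitaryGroup_iff'.1 hU)

theorem exists_specialUnitary_conj_eq_iff {A B : Matrix n n ℂ} (hA : A.IsHermitian) :
    (∃ U ∈ Matrix.specialUnitaryGroup n ℂ, U⁻¹ * A * U = B) ↔
      B.IsHermitian ∧ B.charpoly = A.charpoly := by
  constructor
  · rintro ⟨U, hU, rfl⟩
    have hUU : U * star U = 1 := Matrix.mem_unitaryGroup_iff.1 hU.1
    rw [inv_eq_star_of_mem_unitaryGroup hU.1]
    refine ⟨Matrix.isHermitian_conjTranspose_mul_mul U hA, ?_⟩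
    rw [Matrix.charpoly_mul_comm, ← mul_assoc, hUU, one_mul]
  · rintro ⟨hB, hchar⟩
    obtain ⟨U, hU, rfl⟩ := exists_unitary_conj_eq_of_charpoly_eq hA hB hchar
    obtain ⟨z, hz, hzU⟩ := exists_smul_mem_specialUnitaryGroup hU
    refine ⟨z • U, hzU, ?_⟩
    rw [inv_eq_star_of_mem_unitaryGroup hzU.1, star_smul, smul_mul_assoc, smul_mul_assoc,
      mul_smul_comm, smul_smul, Unitary.star_mul_self_of_mem hz, one_smul]

end UnitaryConjugation

/-- The spin operator `u · σ = ∑ₐ uₐ σₐ` of a vector `u ∈ ℝ³`, where `σₐ` is one half of the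
Pauli matrix. -/
noncomputable def spinOperator (u : Fin 3 → ℝ) : Matrix (Fin 2) (Fin 2) ℂ :=
  ∑ a, u a • pauli a

lemma spinOperator_eq (u : Fin 3 → ℝ) :
    spinOperator u = (1 / 2 : ℂ) •
      !![(u 2 : ℂ), u 0 - u 1 * Complex.I; u 0 + u 1 * Complex.I, -u 2] := by
  ext i j
  fin_cases i <;> fin_cases j <;>
    simp [spinOperator, Fin.sum_univ_three, pauli, pax, pay, paz] <;> ring

lemma isHermitian_pauli (a : Fin 3) : (pauli a).IsHermitian := by
  fin_cases a <;> ext i j <;> fin_cases i <;> fin_cases j <;> simp [pauli, pax, pay, paz]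

lemma trace_pauli (a : Fin 3) : (pauli a).trace = 0 := by
  fin_cases a <;> simp [pauli, pax, pay, paz, Matrix.trace_fin_two]

lemma trace_pauli_mul_pauli (a b : Fin 3) :
    (pauli a * pauli b).trace = if a = b then 1 / 2 else 0 := by
  fin_cases a <;> fin_cases b <;>
    simp [pauli, pax, pay, paz, Matrix.trace_fin_two] <;> grind [Complex.I_mul_I]

lemma trace_pauli_mul_spinOperator (a : Fin 3) (u : Fin 3 → ℝ) :
    (pauli a * spinOperator u).trace = (u a / 2 : ℝ) := by
  simp [spinOperator, Matrix.mul_sum, Matrix.trace_sum, trace_pauli_mul_pauli, div_eq_mul_inv]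

lemma spinOperator_single (a : Fin 3) : spinOperator (Pi.single a 1) = pauli a := by
  simp [spinOperator, Pi.single_apply]

lemma isHermitian_spinOperator (u : Fin 3 → ℝ) : (spinOperator u).IsHermitian :=
  isSelfAdjoint_sum _ fun a _ => (IsSelfAdjoint.all (u a)).smul (isHermitian_pauli a).isSelfAdjoint

lemma trace_spinOperator (u : Fin 3 → ℝ) : (spinOperator u).trace = 0 := by
  simp only [spinOperator, Matrix.trace_sum, Matrix.trace_smul, trace_pauli, smul_zero,
    Finset.sum_const_zero]

lemma det_spinOperator (u : Fin 3 → ℝ) : (spinOperator u).det = (-(∑ a, u a ^ 2) / 4 : ℝ) := by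
  rw [spinOperator_eq, Matrix.det_smul, Matrix.det_fin_two_of, Fintype.card_fin,
    Fin.sum_univ_three]
  push_cast
  linear_combination (u 1 : ℂ) ^ 2 / 4 * Complex.I_sq

lemma exists_spinOperator_eq {H : Matrix (Fin 2) (Fin 2) ℂ} (hH : H.IsHermitian)
    (htr : H.trace = 0) : ∃ u, spinOperator u = H := by
  have h₀ := hH.apply 0 0
  have h₁ := hH.apply 0 1
  rw [Matrix.trace_fin_two] at htr
  refine ⟨![2 * (H 0 1).re, -2 * (H 0 1).im, 2 * (H 0 0).re], ?_⟩
  simp only [RCLike.star_def, Complex.ext_iff, Complex.conj_re, Complex.conj_im, true_and,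
    Complex.add_re, Complex.add_im, Complex.zero_re, Complex.zero_im] at h₀ h₁ htr
  rw [spinOperator_eq]
  ext i j
  fin_cases i <;> fin_cases j <;> apply Complex.ext <;>
    simp <;> linarith

lemma charpoly_spinOperator_eq_iff {u v : Fin 3 → ℝ} :
    (spinOperator u).charpoly = (spinOperator v).charpoly ↔ ∑ a, u a ^ 2 = ∑ a, v a ^ 2 := by
  simp only [Matrix.charpoly_fin_two, trace_spinOperator, det_spinOperator, add_right_inj,
    Polynomial.C_inj, Complex.ofReal_inj]
  rw [div_left_inj' four_ne_zero, neg_inj]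

theorem exists_conj_spinOperator_eq_iff {u : Fin 3 → ℝ} {B : Matrix (Fin 2) (Fin 2) ℂ} :
    (∃ k ∈ Matrix.specialUnitaryGroup (Fin 2) ℂ, k⁻¹ * spinOperator u * k = B) ↔
      ∃ v, ∑ a, v a ^ 2 = ∑ a, u a ^ 2 ∧ spinOperator v = B := by
  rw [exists_specialUnitary_conj_eq_iff (isHermitian_spinOperator u)]
  constructor
  · rintro ⟨hB, hchar⟩
    have htr : B.trace = 0 := by
      rw [Matrix.trace_eq_neg_charpoly_nextCoeff, hchar, ← Matrix.trace_eq_neg_charpoly_nextCoeff,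
        trace_spinOperator]
    obtain ⟨v, rfl⟩ := exists_spinOperator_eq hB htr
    exact ⟨v, charpoly_spinOperator_eq_iff.1 hchar, rfl⟩
  · rintro ⟨v, hv, rfl⟩
    exact ⟨isHermitian_spinOperator v, charpoly_spinOperator_eq_iff.2 hv⟩

lemma hbasis_eq (a : Fin 3) : hbasis a = Complex.I • (pauli a ⊗ₖ pauli a) := by
  rw [hbasis, Iop, Sop, ← Matrix.mul_kronecker_mul, mul_one, one_mul]

lemma trace_conjTranspose_hbasis_mul (a : Fin 3) (A B : Matrix (Fin 2) (Fin 2) ℂ) :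
    ((hbasis a)ᴴ * (Complex.I • (A ⊗ₖ B))).trace = (pauli a * A).trace * (pauli a * B).trace := by
  have hI : star Complex.I * Complex.I = 1 := by simp
  rw [hbasis_eq, Matrix.conjTranspose_smul, Matrix.conjTranspose_kronecker, isHermitian_pauli,
    smul_mul_smul_comm, hI, one_smul, ← Matrix.mul_kronecker_mul, Matrix.trace_kronecker]

lemma Gamma_spinOperator_kronecker (u v : Fin 3 → ℝ) :
    Gamma (Complex.I • (spinOperator u ⊗ₖ spinOperator v)) = ∑ a, (u * v) a • hbasis a := by
  refine Finset.sum_congr rfl fun a _ => ?_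
  rw [trace_conjTranspose_hbasis_mul, trace_pauli_mul_spinOperator, trace_pauli_mul_spinOperator,
    ← Complex.ofReal_mul, Complex.ofReal_re, Pi.mul_apply]
  ring_nf

lemma exists_conj_pauli_eq_iff {a : Fin 3} {B : Matrix (Fin 2) (Fin 2) ℂ} :
    (∃ k ∈ Matrix.specialUnitaryGroup (Fin 2) ℂ, k⁻¹ * pauli a * k = B) ↔
      ∃ u, ∑ i, u i ^ 2 = 1 ∧ spinOperator u = B := by
  rw [← spinOperator_single, exists_conj_spinOperator_eq_iff]
  simp [Pi.single_apply]

lemma conj_kronecker_hbasis (a : Fin 3) (k₁ k₂ : Matrix (Fin 2) (Fin 2) ℂ) :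
    (k₁ ⊗ₖ k₂)⁻¹ * hbasis a * (k₁ ⊗ₖ k₂) =
      Complex.I • ((k₁⁻¹ * pauli a * k₁) ⊗ₖ (k₂⁻¹ * pauli a * k₂)) := by
  rw [hbasis_eq, Matrix.inv_kronecker, mul_smul_comm, smul_mul_assoc, Matrix.mul_kronecker_mul,
    Matrix.mul_kronecker_mul]

lemma adOrbitIzSz_eq :
    adOrbitIzSz = {A | ∃ u v : Fin 3 → ℝ, ∑ a, u a ^ 2 = 1 ∧ ∑ a, v a ^ 2 = 1 ∧
      Complex.I • (spinOperator u ⊗ₖ spinOperator v) = A} := by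
  have hconj := conj_kronecker_hbasis 2
  simp only [hbasis] at hconj
  ext A
  simp only [adOrbitIzSz, hconj, Set.mem_ofPred_eq]
  constructor
  · rintro ⟨k₁, h₁, k₂, h₂, rfl⟩
    obtain ⟨u, hu, hku⟩ := exists_conj_pauli_eq_iff.1 ⟨k₁, h₁, rfl⟩
    obtain ⟨v, hv, hkv⟩ := exists_conj_pauli_eq_iff.1 ⟨k₂, h₂, rfl⟩
    exact ⟨u, v, hu, hv, by rw [hku, hkv]⟩
  · rintro ⟨u, v, hu, hv, rfl⟩
    obtain ⟨k₁, h₁, hku⟩ := exists_conj_pauli_eq_iff.2 ⟨u, hu, rfl⟩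
    obtain ⟨k₂, h₂, hkv⟩ := exists_conj_pauli_eq_iff.2 ⟨v, hv, rfl⟩
    exact ⟨k₁, h₁, k₂, h₂, by rw [hku, hkv]⟩

/- STATEMENT 7 (Kostant convexity for the pair `(su(4), su(2)⊕su(2))`): the image under `Γ`
of the adjoint orbit of `iI_zS_z` is the convex hull of `{±iI_xS_x, ±iI_yS_y, ±iI_zS_z}`. -/
theorem stmt_7 :
    Gamma '' adOrbitIzSz =
      convexHull ℝ ({hbasis 0, -hbasis 0, hbasis 1, -hbasis 1, hbasis 2, -hbasis 2} :
        Set (Matrix (Fin 2 × Fin 2) (Fin 2 × Fin 2) ℂ)) := by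
  rw [insert_neg_eq_range_union_neg_range, convexHull_union_neg_eq_absConvexHull,
    absConvexHull_range_eq, adOrbitIzSz_eq]
  ext A
  simp only [← exists_sum_sq_eq_and_mul_eq_iff, Set.mem_image, Set.mem_ofPred_eq]
  constructor
  · rintro ⟨_, ⟨u, v, hu, hv, rfl⟩, rfl⟩
    exact ⟨u * v, ⟨u, v, hu, hv, rfl⟩, (Gamma_spinOperator_kronecker u v).symm⟩
  · rintro ⟨_, ⟨u, v, hu, hv, rfl⟩, rfl⟩
    exact ⟨_, ⟨u, v, hu, hv, rfl⟩, Gamma_spinOperator_kronecker u v⟩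
end

section
/- Let J > 0 and 0 ≤ T ≤ 3/(2J). Then the maximum of f(α₁, α₂, α₃) = sin(Jπα₁)sin(Jπα₂) + sin(Jπα₁)sin(Jπα₃) over all α₁, α₂, α₃ ≥ 0 with α₁ + α₂ + α₃ = T equals 2 sin(Jπa) sin(Jπb), where a, b ∈ [0, 1/(2J)] satisfy a + 2b = T and sin(Jπa)cos(Jπb) = 2 cos(Jπa)sin(Jπb) (equivalently tan(Jπa) = 2 tan(Jπb)); such a pair (a, b) exists. -/
/-!
If the first angle has nonnegative sine, then
`sin y + sin z = 2 * sin ((y + z) / 2) * cos ((y - z) / 2)` lets us replace the other two angles by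
their midpoint; otherwise the objective is nonpositive.
This leaves `b ↦ sin (s - 2 * b) * sin b` to be maximized on `[0, s / 2]`. It vanishes at both
endpoints and is positive at `s / 3`, so a maximizer is interior, and Fermat's theorem there is the
equation `sin a * cos b = 2 * (cos a * sin b)` with `a = s - 2 * b`. As both sines are positive,
the two cosines have the same sign, and `a + 2 * b ≤ 3 * π / 2` then forces both angles into
`[0, π / 2]`.
-/

section NormalizedAngles

open Real Set

/-- Half the value of the objective `sin x * sin y + sin x * sin z` at the triple
`(s - 2 * b, b, b)` of angles with sum `s`; it is the one-variable function left to maximize once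
the last two angles have been averaged. -/
noncomputable def symmetricObjective (s b : ℝ) : ℝ := sin (s - 2 * b) * sin b

theorem continuous_symmetricObjective (s : ℝ) : Continuous (symmetricObjective s) := by
  unfold symmetricObjective
  fun_prop

theorem hasDerivAt_symmetricObjective (s b : ℝ) :
    HasDerivAt (symmetricObjective s)
      (sin (s - 2 * b) * cos b - 2 * (cos (s - 2 * b) * sin b)) b := by
  have h_inner : HasDerivAt (fun c : ℝ => s - 2 * c) (-2) b := by
    simpa using ((hasDerivAt_id b).const_mul 2).const_sub s
  exact (h_inner.sin.mul (hasDerivAt_sin b)).congr_deriv (by ring)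

theorem sin_mul_cos_eq_of_isLocalMax_symmetricObjective {s b : ℝ}
    (hmax : IsLocalMax (symmetricObjective s) b) :
    sin (s - 2 * b) * cos b = 2 * (cos (s - 2 * b) * sin b) :=
  sub_eq_zero.mp (hmax.hasDerivAt_eq_zero (hasDerivAt_symmetricObjective s b))

theorem exists_pos_isMaxOn_symmetricObjective {s : ℝ} (hs : 0 < s) (hs' : s < 3 * π) :
    ∃ b ∈ Ioo 0 (s / 2), 0 < symmetricObjective s b ∧
      IsMaxOn (symmetricObjective s) (Icc 0 (s / 2)) b := by
  obtain ⟨b, ⟨hb₀, hb₁⟩, hmax⟩ := isCompact_Icc.exists_isMaxOn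
    (nonempty_Icc.mpr (half_pos hs).le) (continuous_symmetricObjective s).continuousOn
  have h_third : 0 < symmetricObjective s (s / 3) := by
    have h_sin : 0 < sin (s / 3) := sin_pos_of_pos_of_lt_pi (by linarith) (by linarith)
    rw [symmetricObjective, show s - 2 * (s / 3) = s / 3 by ring]
    positivity
  have h_pos : 0 < symmetricObjective s b :=
    h_third.trans_le (hmax ⟨by linarith, by linarith⟩)
  have hb_ne_zero : b ≠ 0 := by
    rintro rfl
    simp [symmetricObjective] at h_pos
  have hb_ne_half : b ≠ s / 2 := by
    rintro rfl
    simp [symmetricObjective, mul_div_cancel₀] at h_pos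
  exact ⟨b, ⟨hb₀.lt_of_ne' hb_ne_zero, hb₁.lt_of_ne hb_ne_half⟩, h_pos, hmax⟩

theorem le_pi_div_two_of_sin_mul_cos_eq {a b : ℝ} (ha : 0 ≤ a) (hb : 0 < b)
    (hab : a + 2 * b ≤ 3 * π / 2) (h_sin_a : 0 < sin a)
    (hcrit : sin a * cos b = 2 * (cos a * sin b)) : a ≤ π / 2 ∧ b ≤ π / 2 := by
  have h_sin_b : 0 < sin b := sin_pos_of_pos_of_lt_pi hb (by linarith [pi_pos])
  have hb' : b ≤ π / 2 := by
    by_contra! hb_gt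
    have h_cos_b : cos b < 0 := cos_neg_of_pi_div_two_lt_of_lt hb_gt (by linarith)
    have h_cos_a : 0 < cos a := cos_pos_of_mem_Ioo ⟨by linarith, by linarith⟩
    have h_left := mul_neg_of_pos_of_neg h_sin_a h_cos_b
    have h_right := mul_pos h_cos_a h_sin_b
    linarith
  refine ⟨?_, hb'⟩
  by_contra! ha_gt
  have h_cos_b : 0 ≤ cos b := cos_nonneg_of_mem_Icc ⟨by linarith, hb'⟩
  have h_cos_a : cos a < 0 := cos_neg_of_pi_div_two_lt_of_lt ha_gt (by linarith)
  have h_left := mul_nonneg h_sin_a.le h_cos_b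
  have h_right := mul_neg_of_neg_of_pos h_cos_a h_sin_b
  linarith

theorem sin_add_sin_le_two_mul_sin_midpoint {y z : ℝ} (h : 0 ≤ sin ((y + z) / 2)) :
    sin y + sin z ≤ 2 * sin ((y + z) / 2) := by
  rw [sin_add_sin]
  have := mul_le_of_le_one_right h (cos_le_one ((y - z) / 2))
  linarith

theorem sin_mul_add_le_of_isMaxOn_symmetricObjective {s b x y z : ℝ} (hs : s ≤ 2 * π)
    (hmax : IsMaxOn (symmetricObjective s) (Icc 0 (s / 2)) b)
    (hx : 0 ≤ x) (hy : 0 ≤ y) (hz : 0 ≤ z) (hsum : x + y + z = s) :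
    sin x * sin y + sin x * sin z ≤ 2 * symmetricObjective s b := by
  rw [← mul_add]
  rcases le_total x π with hx_le | hx_ge
  · have h_sin_x : 0 ≤ sin x := sin_nonneg_of_nonneg_of_le_pi hx hx_le
    have h_sin_mid : 0 ≤ sin ((y + z) / 2) :=
      sin_nonneg_of_nonneg_of_le_pi (by linarith) (by linarith)
    calc sin x * (sin y + sin z)
        ≤ sin x * (2 * sin ((y + z) / 2)) := by
          gcongr
          exact sin_add_sin_le_two_mul_sin_midpoint h_sin_mid
      _ = 2 * symmetricObjective s ((y + z) / 2) := by
          rw [symmetricObjective, show s - 2 * ((y + z) / 2) = x by linarith]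
          ring
      _ ≤ 2 * symmetricObjective s b := by
          gcongr
          exact hmax ⟨by linarith, by linarith⟩
  · have h_sin_x : sin x ≤ 0 := by
      rw [← sin_sub_two_pi]
      exact sin_nonpos_of_nonpos_of_neg_pi_le (by linarith) (by linarith)
    have h_sin_y : 0 ≤ sin y := sin_nonneg_of_nonneg_of_le_pi hy (by linarith)
    have h_sin_z : 0 ≤ sin z := sin_nonneg_of_nonneg_of_le_pi hz (by linarith)
    have h_zero_le : symmetricObjective s 0 ≤ symmetricObjective s b :=
      hmax ⟨le_rfl, by linarith⟩
    calc sin x * (sin y + sin z)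
        ≤ 0 := mul_nonpos_of_nonpos_of_nonneg h_sin_x (add_nonneg h_sin_y h_sin_z)
      _ = 2 * symmetricObjective s 0 := by simp [symmetricObjective]
      _ ≤ 2 * symmetricObjective s b := by gcongr

theorem exists_sin_mul_cos_eq_and_forall_sin_mul_add_le {s : ℝ} (hs : 0 ≤ s)
    (hs' : s ≤ 3 * π / 2) :
    ∃ a ∈ Icc 0 (π / 2), ∃ b ∈ Icc 0 (π / 2), a + 2 * b = s ∧
      sin a * cos b = 2 * (cos a * sin b) ∧
      ∀ x y z : ℝ, 0 ≤ x → 0 ≤ y → 0 ≤ z → x + y + z = s →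
        sin x * sin y + sin x * sin z ≤ 2 * (sin a * sin b) := by
  have h_pi := pi_pos
  rcases hs.eq_or_lt with rfl | hs_pos
  · refine ⟨0, ⟨le_rfl, by positivity⟩, 0, ⟨le_rfl, by positivity⟩, by simp, by simp, ?_⟩
    intro x y z hx hy hz hsum
    obtain rfl : x = 0 := by linarith
    simp
  obtain ⟨b, ⟨hb, hb_lt⟩, h_pos, hmax⟩ :=
    exists_pos_isMaxOn_symmetricObjective hs_pos (by linarith)
  have hcrit := sin_mul_cos_eq_of_isLocalMax_symmetricObjective
    (hmax.isLocalMax (Icc_mem_nhds hb hb_lt))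
  have h_sin_b : 0 < sin b := sin_pos_of_pos_of_lt_pi hb (by linarith)
  have h_sin_a : 0 < sin (s - 2 * b) := pos_of_mul_pos_left h_pos h_sin_b.le
  obtain ⟨ha_le, hb_le⟩ := le_pi_div_two_of_sin_mul_cos_eq (by linarith) hb
    (by linarith) h_sin_a hcrit
  refine ⟨s - 2 * b, ⟨by linarith, ha_le⟩, b, ⟨hb.le, hb_le⟩, by ring, hcrit, ?_⟩
  intro x y z hx hy hz hsum
  exact sin_mul_add_le_of_isMaxOn_symmetricObjective (by linarith) hmax hx hy hz hsum

end NormalizedAngles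

theorem div_mul_pi_mem_Icc {J c : ℝ} (hJ : 0 < J) (hc : c ∈ Set.Icc 0 (Real.pi / 2)) :
    c / (J * Real.pi) ∈ Set.Icc 0 (1 / (2 * J)) := by
  refine ⟨div_nonneg hc.1 (by positivity), ?_⟩
  calc c / (J * Real.pi) ≤ Real.pi / 2 / (J * Real.pi) := by gcongr; exact hc.2
    _ = 1 / (2 * J) := by field_simp

/- STATEMENT 12: for `J > 0` and `0 ≤ T ≤ 3/(2J)`, the maximum of
`f(α₁,α₂,α₃) = sin(Jπα₁)sin(Jπα₂) + sin(Jπα₁)sin(Jπα₃)` over `αᵢ ≥ 0` with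
`α₁ + α₂ + α₃ = T` equals `2 sin(Jπa) sin(Jπb)`, where `a, b ∈ [0, 1/(2J)]` satisfy
`a + 2b = T` and `sin(Jπa)cos(Jπb) = 2 cos(Jπa)sin(Jπb)`; such a pair `(a,b)` exists. -/
theorem stmt_12 (J T : ℝ) (hJ : 0 < J) (hT0 : 0 ≤ T) (hT : T ≤ 3 / (2 * J)) :
    ∃ a ∈ Set.Icc (0 : ℝ) (1 / (2 * J)), ∃ b ∈ Set.Icc (0 : ℝ) (1 / (2 * J)),
      a + 2 * b = T ∧
      Real.sin (J * Real.pi * a) * Real.cos (J * Real.pi * b) =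
        2 * (Real.cos (J * Real.pi * a) * Real.sin (J * Real.pi * b)) ∧
      IsGreatest
        {x : ℝ | ∃ α₁ α₂ α₃ : ℝ, 0 ≤ α₁ ∧ 0 ≤ α₂ ∧ 0 ≤ α₃ ∧ α₁ + α₂ + α₃ = T ∧
          x = Real.sin (J * Real.pi * α₁) * Real.sin (J * Real.pi * α₂) +
              Real.sin (J * Real.pi * α₁) * Real.sin (J * Real.pi * α₃)}
        (2 * (Real.sin (J * Real.pi * a) * Real.sin (J * Real.pi * b))) := by
  have hω : 0 < J * Real.pi := by positivity
  have hS : J * Real.pi * T ≤ 3 * Real.pi / 2 :=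
    calc J * Real.pi * T ≤ J * Real.pi * (3 / (2 * J)) := by gcongr
      _ = 3 * Real.pi / 2 := by field_simp
  have h_scale (c : ℝ) : J * Real.pi * (c / (J * Real.pi)) = c := mul_div_cancel₀ c hω.ne'
  obtain ⟨a, ha, b, hb, hab, hcrit, h_le⟩ :=
    exists_sin_mul_cos_eq_and_forall_sin_mul_add_le (by positivity) hS
  have h_sum : a / (J * Real.pi) + 2 * (b / (J * Real.pi)) = T := by
    field_simp
    linarith
  have ha' := div_mul_pi_mem_Icc hJ ha
  have hb' := div_mul_pi_mem_Icc hJ hb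
  refine ⟨a / (J * Real.pi), ha', b / (J * Real.pi), hb', h_sum, ?_, ?_, ?_⟩
  · rwa [h_scale, h_scale]
  · exact ⟨_, _, _, ha'.1, hb'.1, hb'.1, by linarith, by ring⟩
  · rintro _ ⟨α₁, α₂, α₃, h₁, h₂, h₃, rfl, rfl⟩
    rw [h_scale, h_scale]
    exact h_le _ _ _ (by positivity) (by positivity) (by positivity) (by ring)
end

section
/- (𝔪 is the union of the K-conjugates of the Cartan subalgebra 𝔥.) For every A ∈ 𝔪 = span_ℝ{i I_αS_β : α, β ∈ {x,y,z}} ⊂ su(4), there exist k₁, k₂ ∈ SU(2) and Y ∈ 𝔥 = span_ℝ{iI_xS_x, iI_yS_y, iI_zS_z} such that A = (k₁⊗k₂)⁻¹ Y (k₁⊗k₂). -/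
open Kronecker
open scoped Matrix

/-- `𝔪 = span_ℝ{i I_αS_β : α, β ∈ {x,y,z}}`. -/
noncomputable def mLie : Submodule ℝ (Matrix (Fin 2 × Fin 2) (Fin 2 × Fin 2) ℂ) :=
  Submodule.span ℝ {A | ∃ a b : Fin 3, A = Complex.I • (Iop a * Sop b)}

/-!
In the basis `i I_αS_β` an element of `𝔪` is a real `3 × 3` matrix `M`, and conjugation by `k₁ ⊗ k₂`
acts on it by `M ↦ R₁ M R₂ᵀ`, where `R₁, R₂` are the rotations covered by `k₁, k₂`. Since the
elements of `𝔥` are the diagonal matrices, this is a singular value decomposition of `M` with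
factors in `SO(3)`.

To diagonalise `M`, fix a diagonal matrix `D` whose entries have distinct squares and maximise
`tr(R₁ M R₂ᵀ D)` over the compact group of rotations. At a maximiser put `N = R₁ M R₂ᵀ`. Its
stationarity under rotations of the coordinate planes says that `N D` and `D N` are symmetric, hence
`N` commutes with `D²` and is diagonal.
-/

section PlaneRotation

variable {n : Type*} [DecidableEq n]

/-- The rotation by the angle `θ` in the coordinate plane `(i, j)`, from the `i`-axis towards the
`j`-axis. It is meant for `i ≠ j`. -/
noncomputable def planeRotation (i j : n) (θ : ℝ) : Matrix n n ℝ :=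
  1 + (Real.cos θ - 1) • (Matrix.single i i 1 + Matrix.single j j 1) +
    Real.sin θ • (Matrix.single j i 1 - Matrix.single i j 1)

lemma transpose_planeRotation (i j : n) (θ : ℝ) :
    (planeRotation i j θ)ᵀ = planeRotation i j (-θ) := by
  simp only [planeRotation, Matrix.transpose_add, Matrix.transpose_sub, Matrix.transpose_smul,
    Matrix.transpose_one, Matrix.transpose_single, Real.cos_neg, Real.sin_neg]
  module

variable [Fintype n]

section Columns

variable {E : Type*} [AddCommGroup E] [Module ℝ E] {i j k : n}

lemma sum_planeRotation_smul_left (hij : i ≠ j) (θ : ℝ) (v : n → E) :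
    ∑ l, planeRotation i j θ l i • v l = Real.cos θ • v i + Real.sin θ • v j := by
  simp [planeRotation, Matrix.one_apply, Matrix.single_apply, add_smul, sub_smul,
    Finset.sum_add_distrib, hij.symm, ite_smul]

lemma sum_planeRotation_smul_right (hij : i ≠ j) (θ : ℝ) (v : n → E) :
    ∑ l, planeRotation i j θ l j • v l = Real.cos θ • v j - Real.sin θ • v i := by
  simp [planeRotation, Matrix.one_apply, Matrix.single_apply, add_smul,
    Finset.sum_add_distrib, hij, sub_eq_add_neg]

lemma sum_planeRotation_smul_of_ne (hki : k ≠ i) (hkj : k ≠ j) (θ : ℝ) (v : n → E) :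
    ∑ l, planeRotation i j θ l k • v l = v k := by
  simp [planeRotation, Matrix.one_apply, hki.symm, hkj.symm]

end Columns

lemma trace_planeRotation_mul (i j : n) (θ : ℝ) (X : Matrix n n ℝ) :
    (planeRotation i j θ * X).trace =
      X.trace + (Real.cos θ - 1) * (X i i + X j j) + Real.sin θ * (X i j - X j i) := by
  simp [planeRotation, add_mul, sub_mul, mul_add, Matrix.trace_single_mul]

lemma isSymm_of_trace_planeRotation_mul_le {X : Matrix n n ℝ}
    (hX : ∀ i j, i ≠ j → ∀ θ, (planeRotation i j θ * X).trace ≤ X.trace) : X.IsSymm := by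
  refine Matrix.IsSymm.ext fun i j => ?_
  obtain rfl | hij := eq_or_ne i j
  · rfl
  let f : ℝ → ℝ := fun θ => (planeRotation i j θ * X).trace
  have hmax : IsLocalMax f 0 := .of_forall fun θ => by
    simpa [f, trace_planeRotation_mul i j 0] using hX i j hij θ
  have hderiv : HasDerivAt f (X i j - X j i) 0 := by
    simp only [f, trace_planeRotation_mul]
    have hcos : HasDerivAt (fun θ => (Real.cos θ - 1) * (X i i + X j j)) 0 0 := by
      simpa using ((Real.hasDerivAt_cos 0).sub_const 1).mul_const (X i i + X j j)
    have hsin : HasDerivAt (fun θ => Real.sin θ * (X i j - X j i)) (X i j - X j i) 0 := by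
      simpa using (Real.hasDerivAt_sin 0).mul_const (X i j - X j i)
    simpa using (hcos.const_add X.trace).fun_add hsin
  exact (sub_eq_zero.mp (hmax.hasDerivAt_eq_zero hderiv)).symm

lemma isDiag_of_isSymm_mul_diagonal {R : Type*} [CommRing R] [NoZeroDivisors R] {d : n → R}
    (hd : Function.Injective fun i => d i ^ 2) {X : Matrix n n R}
    (hright : (X * Matrix.diagonal d).IsSymm) (hleft : (Matrix.diagonal d * X).IsSymm) :
    X.IsDiag := by
  intro i j hij
  have hr : X j i * d i = X i j * d j := by simpa using hright.apply i j
  have hl : d j * X j i = d i * X i j := by simpa using hleft.apply i j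
  have hsq : (d i ^ 2 - d j ^ 2) * X i j = 0 := by linear_combination d j * hr - d i * hl
  exact (mul_eq_zero.mp hsq).resolve_left (sub_ne_zero.mpr (hd.ne hij))

theorem exists_isDiag_mul_mul_transpose {G : Submonoid (Matrix n n ℝ)}
    (hG : IsCompact (G : Set (Matrix n n ℝ)))
    (hrot : ∀ i j, i ≠ j → ∀ θ, planeRotation i j θ ∈ G) (M : Matrix n n ℝ) :
    ∃ P ∈ G, ∃ Q ∈ G, (P * M * Qᵀ).IsDiag := by
  obtain ⟨d, hd⟩ : ∃ d : n → ℝ, Function.Injective fun i => d i ^ 2 :=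
    ⟨fun i => √(Fintype.equivFin n i : ℕ), fun i j hij => by
      simpa [Fin.val_inj] using hij⟩
  let D := Matrix.diagonal d
  have hcont : Continuous fun p : Matrix n n ℝ × Matrix n n ℝ => (p.1 * M * p.2ᵀ * D).trace := by
    fun_prop
  obtain ⟨⟨P, Q⟩, ⟨hP, hQ⟩, hmax⟩ :=
    (hG.prod hG).exists_isMaxOn ⟨(1, 1), one_mem G, one_mem G⟩ hcont.continuousOn
  replace hmax : ∀ P' ∈ G, ∀ Q' ∈ G, (P' * M * Q'ᵀ * D).trace ≤ (P * M * Qᵀ * D).trace :=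
    fun P' hP' Q' hQ' => isMaxOn_iff.mp hmax (P', Q') ⟨hP', hQ'⟩
  refine ⟨P, hP, Q, hQ, isDiag_of_isSymm_mul_diagonal hd ?_ ?_⟩
  · refine isSymm_of_trace_planeRotation_mul_le fun i j hij θ => ?_
    simpa only [mul_assoc] using hmax _ (mul_mem (hrot i j hij θ) hP) Q hQ
  · refine isSymm_of_trace_planeRotation_mul_le fun i j hij θ => ?_
    calc (planeRotation i j θ * (D * (P * M * Qᵀ))).trace
        = (P * M * (planeRotation i j (-θ) * Q)ᵀ * D).trace := by
          rw [Matrix.transpose_mul, transpose_planeRotation, neg_neg, ← mul_assoc,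
            Matrix.trace_mul_comm]
          simp only [mul_assoc]
      _ ≤ (P * M * Qᵀ * D).trace := hmax P hP _ (mul_mem (hrot i j hij (-θ)) hQ)
      _ = (D * (P * M * Qᵀ)).trace := Matrix.trace_mul_comm _ _

end PlaneRotation

lemma isCompact_specialUnitaryGroup (n 𝕜 : Type*) [Fintype n] [DecidableEq n] [RCLike 𝕜] :
    IsCompact (Matrix.specialUnitaryGroup n 𝕜 : Set (Matrix n n 𝕜)) := by
  have hbox : IsCompact (Set.univ.pi fun _ : n => Set.univ.pi fun _ : n =>
      Metric.closedBall (0 : 𝕜) 1) :=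
    isCompact_univ_pi fun _ => isCompact_univ_pi fun _ => isCompact_closedBall 0 1
  refine IsCompact.of_isClosed_subset (X := Matrix n n 𝕜) hbox ?_ fun U hU i _ j _ => ?_
  · have hset : (Matrix.specialUnitaryGroup n 𝕜 : Set (Matrix n n 𝕜)) =
        {U | U * star U = 1} ∩ {U | U.det = 1} := by
      ext U
      simp [Matrix.mem_specialUnitaryGroup_iff, Matrix.mem_unitaryGroup_iff]
    rw [hset]
    exact (isClosed_eq (by fun_prop) continuous_const).inter
      (isClosed_eq (by fun_prop) continuous_const)
  · simpa using entry_norm_bound_of_unitary (Matrix.specialUnitaryGroup_le_unitaryGroup hU) i j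

section Spin

lemma pauli_mul_self (a : Fin 3) : pauli a * pauli a = (1 / 4 : ℝ) • 1 := by
  ext i j
  fin_cases a <;> fin_cases i <;> fin_cases j <;>
    simp [pauli, pax, pay, paz, Complex.ext_iff] <;> norm_num

lemma pauli_mul_pauli_of_ne {a b : Fin 3} (hab : a ≠ b) :
    pauli b * pauli a = -(pauli a * pauli b) := by
  ext i j
  fin_cases a <;> fin_cases b <;> try exact absurd rfl hab
  all_goals fin_cases i <;> fin_cases j <;> simp [pauli, pax, pay, paz] <;> ring

lemma sum_re_trace_pauli_mul_smul_pauli {X : Matrix (Fin 2) (Fin 2) ℂ} (hX : X.IsHermitian)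
    (htr : X.trace = 0) : ∑ a, (2 * (pauli a * X).trace.re) • pauli a = X := by
  have h₀₀ : (X 0 0).im = 0 := Complex.conj_eq_iff_im.mp (hX.apply 0 0)
  have h₁₀ : X 1 0 = star (X 0 1) := (hX.apply 1 0).symm
  have h₁₁ : X 1 1 = -X 0 0 := by
    rw [Matrix.trace_fin_two] at htr
    linear_combination htr
  ext i j
  fin_cases i <;> fin_cases j <;>
    simp [Fin.sum_univ_three, pauli, pax, pay, paz, Matrix.trace_fin_two, Matrix.mul_apply,
      Complex.ext_iff, h₀₀, h₁₀, h₁₁] <;> ring_nf <;> simp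

/-- The real `3 × 3` matrix of `X ↦ k X k*` in the basis `σ_x, σ_y, σ_z`; for `k ∈ SU(2)` it is the
image of `k` under the double covering `SU(2) → SO(3)`. Coordinates are read off with the trace
form, for which the `σ_α` are orthogonal of square norm `1/2`. -/
noncomputable def spinRotation (k : Matrix (Fin 2) (Fin 2) ℂ) : Matrix (Fin 3) (Fin 3) ℝ :=
  Matrix.of fun a b => 2 * (pauli a * (k * pauli b * star k)).trace.re

lemma continuous_spinRotation : Continuous spinRotation := by
  refine continuous_matrix fun a b => ?_
  simp only [spinRotation, Matrix.of_apply]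
  fun_prop

lemma conj_pauli_eq_sum {k : Matrix (Fin 2) (Fin 2) ℂ} (hk : k ∈ Matrix.unitaryGroup (Fin 2) ℂ)
    (b : Fin 3) : k * pauli b * star k = ∑ a, spinRotation k a b • pauli a := by
  refine (sum_re_trace_pauli_mul_smul_pauli ?_ ?_).symm
  · exact Matrix.isHermitian_mul_mul_conjTranspose k (isHermitian_pauli b)
  · rw [Matrix.trace_mul_comm, ← mul_assoc, Matrix.mem_unitaryGroup_iff'.mp hk, one_mul,
      trace_pauli]

lemma spinRotation_eq_of_conj_pauli {k : Matrix (Fin 2) (Fin 2) ℂ} {R : Matrix (Fin 3) (Fin 3) ℝ}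
    (hR : ∀ b, k * pauli b * star k = ∑ a, R a b • pauli a) : spinRotation k = R := by
  ext a b
  calc 2 * (pauli a * (k * pauli b * star k)).trace.re
      = 2 * ∑ c, R c b * (pauli a * pauli c).trace.re := by
        simp [hR, Finset.mul_sum, Matrix.trace_sum]
    _ = R a b := by simp [trace_pauli_mul_pauli, apply_ite, mul_left_comm]

lemma spinRotation_one : spinRotation 1 = 1 :=
  spinRotation_eq_of_conj_pauli fun b => by simp [Matrix.one_apply]

lemma spinRotation_mul {k l : Matrix (Fin 2) (Fin 2) ℂ} (hk : k ∈ Matrix.unitaryGroup (Fin 2) ℂ)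
    (hl : l ∈ Matrix.unitaryGroup (Fin 2) ℂ) :
    spinRotation (k * l) = spinRotation k * spinRotation l := by
  refine spinRotation_eq_of_conj_pauli fun c => ?_
  calc k * l * pauli c * star (k * l)
      = k * (l * pauli c * star l) * star k := by simp only [star_mul, mul_assoc]
    _ = ∑ b, spinRotation l b c • (k * pauli b * star k) := by
        simp only [conj_pauli_eq_sum hl, Finset.mul_sum, Finset.sum_mul, mul_smul_comm,
          smul_mul_assoc]
    _ = ∑ b, ∑ a, (spinRotation k a b * spinRotation l b c) • pauli a := by
        simp only [conj_pauli_eq_sum hk, Finset.smul_sum, smul_smul, mul_comm]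
    _ = ∑ a, (spinRotation k * spinRotation l) a c • pauli a := by
        rw [Finset.sum_comm]
        simp only [Matrix.mul_apply, Finset.sum_smul]

/-- For `a ≠ b`, the element of `SU(2)` over the rotation by `θ` in the plane `(a, b)`. Since
`4 σ_a σ_b` has square `-1`, it is `exp (-2 θ σ_a σ_b)`. -/
noncomputable def pauliRotor (a b : Fin 3) (θ : ℝ) : Matrix (Fin 2) (Fin 2) ℂ :=
  Real.cos (θ / 2) • 1 - (4 * Real.sin (θ / 2)) • (pauli a * pauli b)

lemma star_pauliRotor {a b : Fin 3} (hab : a ≠ b) (θ : ℝ) :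
    star (pauliRotor a b θ) =
      Real.cos (θ / 2) • 1 + (4 * Real.sin (θ / 2)) • (pauli a * pauli b) := by
  simp only [pauliRotor, star_sub, star_smul, star_one, star_mul, (isHermitian_pauli _).star_eq,
    pauli_mul_pauli_of_ne hab, star_trivial]
  module

lemma pauli_mul_pauli_mul_pauli {a b : Fin 3} (hab : a ≠ b) :
    pauli a * pauli b * pauli a = (-1 / 4 : ℝ) • pauli b := by
  rw [mul_assoc, pauli_mul_pauli_of_ne hab, mul_neg, ← mul_assoc, pauli_mul_self, smul_mul_assoc,
    one_mul]
  module

lemma pauliRotor_mem_specialUnitaryGroup {a b : Fin 3} (hab : a ≠ b) (θ : ℝ) :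
    pauliRotor a b θ ∈ Matrix.specialUnitaryGroup (Fin 2) ℂ := by
  have hsq : pauli a * pauli b * (pauli a * pauli b) = (-1 / 16 : ℝ) • 1 := by
    rw [← mul_assoc, pauli_mul_pauli_mul_pauli hab, smul_mul_assoc, pauli_mul_self]
    module
  refine Matrix.mem_specialUnitaryGroup_iff.mpr ⟨Matrix.mem_unitaryGroup_iff.mpr ?_, ?_⟩
  · rw [star_pauliRotor hab, pauliRotor]
    simp only [sub_mul, mul_add, smul_mul_assoc, mul_smul_comm, one_mul, mul_one, hsq]
    match_scalars <;> linarith [Real.cos_sq_add_sin_sq (θ / 2)]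
  · have hcs : (Real.cos (θ / 2) : ℂ) ^ 2 + (Real.sin (θ / 2) : ℂ) ^ 2 = 1 := by
      exact_mod_cast Real.cos_sq_add_sin_sq (θ / 2)
    rw [pauliRotor, Matrix.det_fin_two]
    generalize Real.cos (θ / 2) = c, Real.sin (θ / 2) = s at hcs
    fin_cases a <;> fin_cases b <;> try exact absurd rfl hab
    all_goals simp [pauli, pax, pay, paz]; grind [Complex.I_sq]

lemma pauliRotor_conj_pauli {a b : Fin 3} (hab : a ≠ b) (θ : ℝ) (e : Fin 3) :
    pauliRotor a b θ * pauli e * star (pauliRotor a b θ) =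
      ∑ c, planeRotation a b θ c e • pauli c := by
  have hcos : Real.cos θ = Real.cos (θ / 2) ^ 2 - Real.sin (θ / 2) ^ 2 := by
    rw [← Real.cos_two_mul', mul_div_cancel₀ θ two_ne_zero]
  have hsin : Real.sin θ = 2 * Real.sin (θ / 2) * Real.cos (θ / 2) := by
    rw [← Real.sin_two_mul, mul_div_cancel₀ θ two_ne_zero]
  have hleft : pauli a * (pauli a * pauli b) = (1 / 4 : ℝ) • pauli b := by
    rw [← mul_assoc, pauli_mul_self, smul_mul_assoc, one_mul]
  have hright : pauli a * pauli b * pauli b = (1 / 4 : ℝ) • pauli a := by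
    rw [mul_assoc, pauli_mul_self, mul_smul_comm, mul_one]
  have hbab : pauli b * (pauli a * pauli b) = (-1 / 4 : ℝ) • pauli a := by
    rw [← mul_assoc, pauli_mul_pauli_mul_pauli hab.symm]
  obtain rfl | hea := eq_or_ne e a
  · rw [sum_planeRotation_smul_left hab, hcos, hsin, star_pauliRotor hab, pauliRotor]
    simp only [sub_mul, mul_add, smul_mul_assoc, mul_smul_comm, one_mul, mul_one, hleft,
      pauli_mul_pauli_mul_pauli hab, hbab]
    module
  obtain rfl | heb := eq_or_ne e b
  · rw [sum_planeRotation_smul_right hab, hcos, hsin, star_pauliRotor hab, pauliRotor]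
    simp only [sub_mul, mul_add, smul_mul_assoc, mul_smul_comm, one_mul, mul_one, hleft, hright,
      hbab]
    module
  · have hcomm : Commute (pauliRotor a b θ) (pauli e) := by
      have hab_comm : Commute (pauli a * pauli b) (pauli e) := by
        rw [commute_iff_eq, ← mul_assoc (pauli e), pauli_mul_pauli_of_ne hea.symm, neg_mul,
          mul_assoc (pauli a) (pauli e), pauli_mul_pauli_of_ne heb.symm, mul_neg, neg_neg,
          mul_assoc]
      exact ((Commute.one_left _).smul_left _).sub_left (hab_comm.smul_left _)
    rw [sum_planeRotation_smul_of_ne hea heb, hcomm.eq, mul_assoc,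
      Matrix.mem_unitaryGroup_iff.mp (Matrix.specialUnitaryGroup_le_unitaryGroup
        (pauliRotor_mem_specialUnitaryGroup hab θ)), mul_one]

lemma spinRotation_pauliRotor {a b : Fin 3} (hab : a ≠ b) (θ : ℝ) :
    spinRotation (pauliRotor a b θ) = planeRotation a b θ :=
  spinRotation_eq_of_conj_pauli (pauliRotor_conj_pauli hab θ)

/-- The image of `SU(2)` under `spinRotation`, which is `SO(3)`. -/
noncomputable def spinRotationSubmonoid : Submonoid (Matrix (Fin 3) (Fin 3) ℝ) where
  carrier := spinRotation '' Matrix.specialUnitaryGroup (Fin 2) ℂ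
  one_mem' := ⟨1, one_mem _, spinRotation_one⟩
  mul_mem' := by
    rintro _ _ ⟨k, hk, rfl⟩ ⟨l, hl, rfl⟩
    exact ⟨k * l, mul_mem hk hl,
      spinRotation_mul (Matrix.specialUnitaryGroup_le_unitaryGroup hk)
        (Matrix.specialUnitaryGroup_le_unitaryGroup hl)⟩

lemma exists_isDiag_spinRotation_mul_mul_transpose (M : Matrix (Fin 3) (Fin 3) ℝ) :
    ∃ k₁ ∈ Matrix.specialUnitaryGroup (Fin 2) ℂ, ∃ k₂ ∈ Matrix.specialUnitaryGroup (Fin 2) ℂ,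
      (spinRotation k₁ * M * (spinRotation k₂)ᵀ).IsDiag := by
  have hcompact : IsCompact (spinRotationSubmonoid : Set (Matrix (Fin 3) (Fin 3) ℝ)) :=
    (isCompact_specialUnitaryGroup (Fin 2) ℂ).image continuous_spinRotation
  have hrot : ∀ a b, a ≠ b → ∀ θ, planeRotation a b θ ∈ spinRotationSubmonoid :=
    fun a b hab θ => ⟨_, pauliRotor_mem_specialUnitaryGroup hab θ, spinRotation_pauliRotor hab θ⟩
  obtain ⟨_, ⟨k₁, hk₁, rfl⟩, _, ⟨k₂, hk₂, rfl⟩, hdiag⟩ :=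
    exists_isDiag_mul_mul_transpose hcompact hrot M
  exact ⟨k₁, hk₁, k₂, hk₂, hdiag⟩

end Spin

section Coupling

/-- The element of `𝔪` whose coordinates in the basis `i I_αS_β` are the entries of `M`. -/
noncomputable def spinCoupling (M : Matrix (Fin 3) (Fin 3) ℝ) :
    Matrix (Fin 2 × Fin 2) (Fin 2 × Fin 2) ℂ :=
  ∑ a, ∑ b, M a b • Complex.I • (Iop a * Sop b)

lemma Iop_mul_Sop (a b : Fin 3) : Iop a * Sop b = pauli a ⊗ₖ pauli b := by
  rw [Iop, Sop, ← Matrix.mul_kronecker_mul, mul_one, one_mul]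

lemma exists_spinCoupling_eq_of_mem_mLie {A : Matrix (Fin 2 × Fin 2) (Fin 2 × Fin 2) ℂ}
    (hA : A ∈ mLie) : ∃ M, spinCoupling M = A := by
  have hrange : {A | ∃ a b : Fin 3, A = Complex.I • (Iop a * Sop b)} =
      Set.range fun p : Fin 3 × Fin 3 => Complex.I • (Iop p.1 * Sop p.2) := by
    ext A
    simp [eq_comm]
  rw [mLie, hrange, Submodule.mem_span_range_iff_exists_fun] at hA
  obtain ⟨c, rfl⟩ := hA
  exact ⟨Matrix.of fun a b => c (a, b), by
    simp only [spinCoupling, Matrix.of_apply, Fintype.sum_prod_type]⟩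

lemma spinCoupling_mem_span_hbasis {M : Matrix (Fin 3) (Fin 3) ℝ} (hM : M.IsDiag) :
    spinCoupling M ∈ Submodule.span ℝ {hbasis 0, hbasis 1, hbasis 2} := by
  have hsum : spinCoupling M = ∑ a, M a a • hbasis a := by
    refine Finset.sum_congr rfl fun a _ => ?_
    refine Finset.sum_eq_single_of_mem a (Finset.mem_univ a) fun b _ hba => ?_
    rw [hM hba.symm, zero_smul]
  rw [hsum]
  refine Submodule.sum_mem _ fun a _ => Submodule.smul_mem _ _ (Submodule.subset_span ?_)
  fin_cases a <;> simp

lemma sum_smul_kronecker_sum_smul {ι κ l m n p R S : Type*} [Fintype ι] [Fintype κ]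
    [CommSemiring R] [Semiring S] [Algebra R S]
    (r : ι → R) (A : ι → Matrix l m S) (s : κ → R) (B : κ → Matrix n p S) :
    (∑ i, r i • A i) ⊗ₖ (∑ j, s j • B j) = ∑ i, ∑ j, (r i * s j) • (A i ⊗ₖ B j) := by
  change Matrix.kroneckerBilinear (R := R) _ _ =
    ∑ i, ∑ j, (r i * s j) • Matrix.kroneckerBilinear (R := R) _ _
  simp only [map_sum, map_smul, LinearMap.sum_apply, LinearMap.smul_apply, Finset.smul_sum,
    smul_smul, mul_comm (s _)]
  exact Finset.sum_comm

lemma kronecker_conj_spinCoupling {k₁ k₂ : Matrix (Fin 2) (Fin 2) ℂ}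
    (hk₁ : k₁ ∈ Matrix.unitaryGroup (Fin 2) ℂ) (hk₂ : k₂ ∈ Matrix.unitaryGroup (Fin 2) ℂ)
    (M : Matrix (Fin 3) (Fin 3) ℝ) :
    (k₁ ⊗ₖ k₂) * spinCoupling M * star (k₁ ⊗ₖ k₂) =
      spinCoupling (spinRotation k₁ * M * (spinRotation k₂)ᵀ) := by
  have hconj (b d : Fin 3) : (k₁ ⊗ₖ k₂) * (pauli b ⊗ₖ pauli d) * star (k₁ ⊗ₖ k₂) =
      ∑ a, ∑ c, (spinRotation k₁ a b * spinRotation k₂ c d) • (pauli a ⊗ₖ pauli c) := by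
    rw [Matrix.star_eq_conjTranspose, Matrix.conjTranspose_kronecker,
      ← Matrix.mul_kronecker_mul, ← Matrix.mul_kronecker_mul, ← Matrix.star_eq_conjTranspose,
      ← Matrix.star_eq_conjTranspose, conj_pauli_eq_sum hk₁, conj_pauli_eq_sum hk₂,
      sum_smul_kronecker_sum_smul]
  simp only [spinCoupling, Iop_mul_Sop, Finset.mul_sum, Finset.sum_mul, mul_smul_comm,
    smul_mul_assoc, hconj]
  simp only [Fin.sum_univ_three, Matrix.mul_apply, Matrix.transpose_apply]
  module

end Coupling

/- STATEMENT 18: every `A ∈ 𝔪` is conjugate by some `k₁ ⊗ k₂` (`k₁, k₂ ∈ SU(2)`) to an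
element `Y` of the Cartan subalgebra `𝔥 = span_ℝ{iI_xS_x, iI_yS_y, iI_zS_z}`:
`A = (k₁⊗k₂)⁻¹ Y (k₁⊗k₂)`. -/
theorem stmt_18 (A : Matrix (Fin 2 × Fin 2) (Fin 2 × Fin 2) ℂ) (hA : A ∈ mLie) :
    ∃ k₁ ∈ Matrix.specialUnitaryGroup (Fin 2) ℂ,
    ∃ k₂ ∈ Matrix.specialUnitaryGroup (Fin 2) ℂ,
    ∃ Y ∈ Submodule.span ℝ ({hbasis 0, hbasis 1, hbasis 2} :
        Set (Matrix (Fin 2 × Fin 2) (Fin 2 × Fin 2) ℂ)),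
      A = (k₁ ⊗ₖ k₂)⁻¹ * Y * (k₁ ⊗ₖ k₂) := by
  obtain ⟨M, rfl⟩ := exists_spinCoupling_eq_of_mem_mLie hA
  obtain ⟨k₁, hk₁, k₂, hk₂, hdiag⟩ := exists_isDiag_spinRotation_mul_mul_transpose M
  have hu₁ := Matrix.specialUnitaryGroup_le_unitaryGroup hk₁
  have hu₂ := Matrix.specialUnitaryGroup_le_unitaryGroup hk₂
  have hunit : star (k₁ ⊗ₖ k₂) * (k₁ ⊗ₖ k₂) = 1 :=
    (Unitary.mem_iff.mp (Matrix.kronecker_mem_unitary hu₁ hu₂)).1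
  refine ⟨k₁, hk₁, k₂, hk₂, _, spinCoupling_mem_span_hbasis hdiag, ?_⟩
  rw [← kronecker_conj_spinCoupling hu₁ hu₂, Matrix.inv_eq_left_inv hunit]
  calc spinCoupling M
      = (star (k₁ ⊗ₖ k₂) * (k₁ ⊗ₖ k₂)) * spinCoupling M * (star (k₁ ⊗ₖ k₂) * (k₁ ⊗ₖ k₂)) := by
        rw [hunit, one_mul, mul_one]
    _ = star (k₁ ⊗ₖ k₂) * ((k₁ ⊗ₖ k₂) * spinCoupling M * star (k₁ ⊗ₖ k₂)) * (k₁ ⊗ₖ k₂) := by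
        simp only [mul_assoc]
end
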